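/- Let G be a noncyclic grid graph with parameters d ≥ 1 and lengths ℓ₁,…,ℓ_d satisfying ℓᵢ ≥ 2·(ℓ_{i+1}·…·ℓ_d) + 2 for all i ∈ {1,…,d−1} and ℓ_d ≥ 3. Let f be a candidate graphical translation of G maximizing |V₀,f| among all candidate graphical translations of G, extended by f(ω) = ω, and let v be a vertex such that fⁿ(v) ≠ ω for all n ≥ 0. Then the orbit of v is eventually periodic with period 4: there exists N ≥ 0 such that f^{n+4}(v) = fⁿ(v) for all n ≥ N. -/

import Mathlib

/-- Membership in the vertex set of the noncyclic grid graph with parameters `d` and `ℓ`: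
`V = [0, ℓ₁ - 1] × ⋯ × [0, ℓ_d - 1] ⊆ ℤ^d`. -/
def InGrid (d : ℕ) (ℓ : Fin d → ℕ) (v : Fin d → ℤ) : Prop :=
  ∀ i, 0 ≤ v i ∧ v i < ℓ i

/-- Adjacency in the noncyclic grid graph: taxicab distance equal to `1`. -/
def TaxiAdj {d : ℕ} (v w : Fin d → ℤ) : Prop :=
  (∑ i, |v i - w i|) = 1

/-- The `i`-th canonical basis vector of `ℤ^d`. -/
def gridBasis (d : ℕ) (i : Fin d) : Fin d → ℤ :=
  fun j => if j = i then 1 else 0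

/-- A candidate graphical translation of the noncyclic grid graph with parameters `d`
and `ℓ`: a map `f : V → V ∪ {ω}` (modeled with `Option`, `none` being the black hole
`ω`) that is injective on `V₀,f = f⁻¹(V)`, maps every vertex of `V₀,f` to a neighbor,
and preserves (non-)adjacency both ways on `V₀,f`. -/
structure IsCandidateGridTranslation (d : ℕ) (ℓ : Fin d → ℕ)
    (f : {v : Fin d → ℤ // InGrid d ℓ v} → Option {v : Fin d → ℤ // InGrid d ℓ v}) :
    Prop where
  inj : ∀ v w x, f v = some x → f w = some x → v = w
  adj_map : ∀ v w, f v = some w → TaxiAdj v.1 w.1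
  pres : ∀ v₁ v₂ w₁ w₂, f v₁ = some w₁ → f v₂ = some w₂ →
    (TaxiAdj v₁.1 v₂.1 ↔ TaxiAdj w₁.1 w₂.1)

/-!
A translation along one axis loses a single layer, so a maximal `f` loses at most one layer's worth
of vertices. A long axis therefore contains two consecutive layers without lost vertices, and such a
slab is rigid: a move inside it would propagate in its own direction until it leaves the grid, so
every vertex of the slab moves along the axis, and all of a layer in the same direction. If the two
layers exchange places, then the layers next to them are lost, which costs too much except for a
slab at the boundary of the grid; in that case there is another slab where it does not happen. If
the two layers move in the same direction, then counting lost vertices propagates the translation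
to all but the last layer, and every move of `f` raises the height along the axis. Hence in
dimension at least two a maximal `f` has no infinite orbit at all. On a path, an infinite orbit is a
bounded walk with steps `± 1`, which has to turn back, and a deterministic walk which turns back
once alternates between two vertices.
-/

/-! ### Unit steps -/

section UnitStep

variable {ι : Type*} [DecidableEq ι] {u w p q : ι → ℤ}

/-- A signed basis vector `± eᵢ` of `ℤ^ι`; by `taxiAdj_iff` these are the differences of adjacent
vertices of a grid. -/
def IsUnitStep (u : ι → ℤ) : Prop :=
  ∃ i, u = Pi.single i 1 ∨ u = Pi.single i (-1)

namespace IsUnitStep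

theorem single_one (i : ι) : IsUnitStep (Pi.single i 1) := ⟨i, Or.inl rfl⟩

theorem neg (hu : IsUnitStep u) : IsUnitStep (-u) := by
  obtain ⟨i, rfl | rfl⟩ := hu
  · exact ⟨i, Or.inr (Pi.single_neg i 1).symm⟩
  · exact ⟨i, Or.inl (by rw [← Pi.single_neg, neg_neg])⟩

theorem ne_zero (hu : IsUnitStep u) : u ≠ 0 := by
  obtain ⟨i, rfl | rfl⟩ := hu <;> simp

theorem add_self_ne_zero (hu : IsUnitStep u) : u + u ≠ 0 :=
  fun h => hu.ne_zero (self_eq_neg.mp (eq_neg_of_add_eq_zero_left h))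

theorem abs_apply_le_one (hu : IsUnitStep u) (i : ι) : |u i| ≤ 1 := by
  obtain ⟨j, rfl | rfl⟩ := hu <;> by_cases h : i = j <;> simp [h]

theorem eq_or_eq_neg_or_mul_eq_zero (hu : IsUnitStep u) (hw : IsUnitStep w) :
    u = w ∨ u = -w ∨ u * w = 0 := by
  obtain ⟨i, hu⟩ := hu
  obtain ⟨j, hw⟩ := hw
  by_cases hij : i = j
  · subst hij
    rcases hu with rfl | rfl <;> rcases hw with rfl | rfl <;> simp [← Pi.single_neg]
  · refine Or.inr (Or.inr (funext fun k => ?_))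
    by_cases hk : k = i
    · rcases hw with rfl | rfl <;> simp [hk, hij]
    · rcases hu with rfl | rfl <;> simp [hk]

theorem add_ne_zero_of_mul_eq_zero (hu : IsUnitStep u) (h : u * w = 0) : u + w ≠ 0 := by
  intro huw
  have hsq : u ^ 2 = 0 := by linear_combination u * huw - h
  exact hu.ne_zero (eq_zero_of_pow_eq_zero hsq)

section DotProduct

variable [Fintype ι]

theorem dotProduct_self (hu : IsUnitStep u) : u ⬝ᵥ u = 1 := by
  obtain ⟨i, rfl | rfl⟩ := hu <;> simp

theorem eq_of_dotProduct_pos (hu : IsUnitStep u) (hw : IsUnitStep w) (h : 0 < u ⬝ᵥ w) :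
    u = w := by
  rcases hu.eq_or_eq_neg_or_mul_eq_zero hw with rfl | rfl | h0
  · rfl
  · rw [neg_dotProduct, hw.dotProduct_self] at h
    omega
  · have : u ⬝ᵥ w = 0 := Finset.sum_eq_zero fun i _ => congrFun h0 i
    omega

theorem dotProduct_nonneg (hu : IsUnitStep u) (hw : IsUnitStep w) (h : u + w ≠ 0) :
    0 ≤ u ⬝ᵥ w := by
  by_contra! hneg
  have : u = -w := hu.eq_of_dotProduct_pos hw.neg (by rw [dotProduct_neg]; omega)
  exact h (by rw [this, neg_add_cancel])

end DotProduct

-- Pair the equation with `u`: since `u ⬝ᵥ (u + w) ≥ 1`, one of `u ⬝ᵥ p`, `u ⬝ᵥ q` is positive.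
theorem eq_or_eq_of_add_eq_add [Finite ι] (hu : IsUnitStep u) (hw : IsUnitStep w)
    (hp : IsUnitStep p) (hq : IsUnitStep q) (h : u + w = p + q) (h0 : p + q ≠ 0) :
    u = p ∨ u = q := by
  have := Fintype.ofFinite ι
  have hdot := congrArg (u ⬝ᵥ ·) h
  simp only [dotProduct_add, hu.dotProduct_self] at hdot
  have hnonneg := hu.dotProduct_nonneg hw (h ▸ h0)
  by_cases hpos : 0 < u ⬝ᵥ p
  · exact Or.inl (hu.eq_of_dotProduct_pos hp hpos)
  · exact Or.inr (hu.eq_of_dotProduct_pos hq (by omega))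

end IsUnitStep

theorem isUnitStep_iff_sum_abs_eq_one [Fintype ι] : IsUnitStep u ↔ ∑ i, |u i| = 1 := by
  constructor
  · rintro ⟨i, rfl | rfl⟩ <;> simp [Pi.single_apply, apply_ite abs]
  · intro h
    obtain ⟨i, hi⟩ : ∃ i, u i ≠ 0 := by
      by_contra! hzero
      simp [hzero] at h
    rw [← Finset.add_sum_erase _ _ (Finset.mem_univ i)] at h
    have hrest : 0 ≤ ∑ j ∈ Finset.univ.erase i, |u j| := Finset.sum_nonneg fun _ _ => abs_nonneg _
    have hpos : 0 < |u i| := abs_pos.mpr hi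
    have hrest0 : ∑ j ∈ Finset.univ.erase i, |u j| = 0 := by omega
    rw [Finset.sum_eq_zero_iff_of_nonneg fun _ _ => abs_nonneg _] at hrest0
    have hu : u = Pi.single i (u i) := by
      ext j
      by_cases hj : j = i
      · subst hj
        simp
      · simpa [hj] using hrest0 j (by simp [hj])
    rcases eq_or_eq_neg_of_abs_eq (show |u i| = 1 by omega) with h1 | h1
    · exact ⟨i, Or.inl (h1 ▸ hu)⟩
    · exact ⟨i, Or.inr (h1 ▸ hu)⟩

end UnitStep

theorem taxiAdj_iff {d : ℕ} {v w : Fin d → ℤ} : TaxiAdj v w ↔ IsUnitStep (w - v) := by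
  simp [isUnitStep_iff_sum_abs_eq_one, TaxiAdj, abs_sub_comm]

/-! ### Layers of a grid -/

section Grid

variable {d : ℕ} {ℓ : Fin d → ℕ} {v u w : Fin d → ℤ} {i : Fin d}

theorem finite_setOf_inGrid (ℓ : Fin d → ℕ) : {v | InGrid d ℓ v}.Finite :=
  (Set.finite_Icc 0 fun i => (ℓ i : ℤ)).subset fun _ hv =>
    ⟨fun j => (hv j).1, fun j => (hv j).2.le⟩

theorem InGrid.add_single_iff (hv : InGrid d ℓ v) {s : ℤ} :
    InGrid d ℓ (v + Pi.single i s) ↔ 0 ≤ v i + s ∧ v i + s < ℓ i := by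
  refine ⟨fun h => by simpa using h i, fun h j => ?_⟩
  by_cases hj : j = i
  · subst hj
    simpa using h
  · simpa [hj] using hv j

theorem InGrid.add_add (hu : InGrid d ℓ (v + u)) (hw : InGrid d ℓ (v + w))
    (huw : u * w = 0) : InGrid d ℓ (v + u + w) := by
  intro i
  rcases mul_eq_zero.mp (congrFun huw i) with h | h
  · simpa [h] using hw i
  · simpa [h] using hu i

/-- The vertices of the grid at height `c`, for a height function `h`; the layers orthogonal to the
`i`-th axis are those of `h = (· i)`. -/
def layer (ℓ : Fin d → ℕ) (h : (Fin d → ℤ) → ℤ) (c : ℤ) : Set (Fin d → ℤ) :=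
  {v | InGrid d ℓ v ∧ h v = c}

theorem finite_layer (ℓ : Fin d → ℕ) (h : (Fin d → ℤ) → ℤ) (c : ℤ) : (layer ℓ h c).Finite :=
  (finite_setOf_inGrid ℓ).subset fun _ hv => hv.1

theorem ncard_layer (ℓ : Fin d → ℕ) (i : Fin d) {c : ℤ} (hc : 0 ≤ c) (hcℓ : c < ℓ i) :
    (layer ℓ (· i) c).ncard = ∏ j ∈ Finset.univ.erase i, ℓ j := by
  have hpi : layer ℓ (· i) c =
      Fintype.piFinset (Function.update (fun j => Finset.Ico 0 (ℓ j : ℤ)) i {c}) := by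
    ext v
    simp only [layer, InGrid, Set.mem_ofPred_eq, Finset.mem_coe, Fintype.mem_piFinset]
    constructor
    · rintro ⟨hv, rfl⟩ j
      by_cases hj : j = i
      · subst hj
        simp
      · simpa [hj] using hv j
    · intro hv
      have hvi : v i = c := by simpa using hv i
      refine ⟨fun j => ?_, hvi⟩
      by_cases hj : j = i
      · subst hj
        exact hvi ▸ ⟨hc, hcℓ⟩
      · simpa [hj] using hv j
  rw [hpi, Set.ncard_coe_finset, Fintype.card_piFinset,
    ← Finset.mul_prod_erase _ _ (Finset.mem_univ i)]
  simp only [Function.update_self, Finset.card_singleton, one_mul]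
  refine Finset.prod_congr rfl fun j hj => ?_
  simp [Finset.ne_of_mem_erase hj]

end Grid

/-! ### Local structure of candidate translations -/

section Translation

variable {d : ℕ} {ℓ : Fin d → ℕ}
  {f : {v : Fin d → ℤ // InGrid d ℓ v} → Option {v : Fin d → ℤ // InGrid d ℓ v}}

/-- The graph of the partial map `f`, as a relation on all of `ℤ^d`. -/
def Moves (f : {v : Fin d → ℤ // InGrid d ℓ v} → Option {v : Fin d → ℤ // InGrid d ℓ v})
    (a b : Fin d → ℤ) : Prop :=
  ∃ (ha : InGrid d ℓ a) (hb : InGrid d ℓ b), f ⟨a, ha⟩ = some ⟨b, hb⟩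

/-- `Survives f a` says that `a` is a vertex which `f` does not send to the black hole. -/
def Survives (f : {v : Fin d → ℤ // InGrid d ℓ v} → Option {v : Fin d → ℤ // InGrid d ℓ v})
    (a : Fin d → ℤ) : Prop :=
  ∃ b, Moves f a b

/-- The set of vertices which `f` sends to the black hole. -/
def lost (f : {v : Fin d → ℤ // InGrid d ℓ v} → Option {v : Fin d → ℤ // InGrid d ℓ v}) :
    Set (Fin d → ℤ) :=
  {a | InGrid d ℓ a ∧ ¬ Survives f a}

theorem finite_lost : (lost f).Finite :=
  (finite_setOf_inGrid ℓ).subset fun _ ha => ha.1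

namespace Moves

variable {a b c : Fin d → ℤ}

theorem inGrid_left (h : Moves f a b) : InGrid d ℓ a := h.1

theorem inGrid_right (h : Moves f a b) : InGrid d ℓ b := h.2.1

theorem survives (h : Moves f a b) : Survives f a := ⟨b, h⟩

theorem right_unique (hb : Moves f a b) (hc : Moves f a c) : b = c := by
  obtain ⟨_, _, hb⟩ := hb
  obtain ⟨_, _, hc⟩ := hc
  simpa using hb.symm.trans hc

end Moves

namespace IsCandidateGridTranslation

variable {a b a' b' v u p q : Fin d → ℤ}

section Local

variable (hf : IsCandidateGridTranslation d ℓ f)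
include hf

theorem left_unique (h : Moves f a b) (h' : Moves f a' b) : a = a' := by
  obtain ⟨_, _, h⟩ := h
  obtain ⟨_, _, h'⟩ := h'
  simpa using hf.inj _ _ _ h h'

theorem isUnitStep_sub (h : Moves f a b) : IsUnitStep (b - a) :=
  taxiAdj_iff.mp (hf.adj_map _ _ h.2.2)

theorem isUnitStep_sub_iff (h : Moves f a b) (h' : Moves f a' b') :
    IsUnitStep (a' - a) ↔ IsUnitStep (b' - b) := by
  rw [← taxiAdj_iff, ← taxiAdj_iff]
  exact hf.pres _ _ _ _ h.2.2 h'.2.2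

theorem moves_or_moves_of_adj (ha : Survives f a) (hb : Moves f b (a + p + q))
    (hab : IsUnitStep (b - a)) (hp : IsUnitStep p) (hq : IsUnitStep q) (hpq : p + q ≠ 0) :
    Moves f a (a + p) ∨ Moves f a (a + q) := by
  obtain ⟨x, hx⟩ := ha
  have hsum : (x - a) + (a + p + q - x) = p + q := by ring
  refine (IsUnitStep.eq_or_eq_of_add_eq_add (hf.isUnitStep_sub hx)
    ((hf.isUnitStep_sub_iff hx hb).mp hab) hp hq hsum hpq).imp ?_ ?_ <;>
  · rintro rfl
    rwa [add_sub_cancel]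

theorem moves_of_moves_add (hp : IsUnitStep p) (ha : Survives f a)
    (h : Moves f (a + p) (a + p + p)) : Moves f a (a + p) :=
  (hf.moves_or_moves_of_adj ha h (by rwa [add_sub_cancel_left]) hp hp hp.add_self_ne_zero).elim
    id id

theorem not_survives_add_of_swap (hq : IsUnitStep q) (h : Moves f v (v + q))
    (h' : Moves f (v + q) v) : ¬ Survives f (v + q + q) := by
  intro hs
  have hmove : Moves f (v + q + q) (v + q + q + -q) :=
    hf.moves_of_moves_add hq.neg hs (by simpa using h')
  rw [add_neg_cancel_right] at hmove
  have heq := hf.left_unique h hmove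
  exact hq.add_self_ne_zero (by linear_combination -heq)

theorem not_survives_sub_of_swap (hq : IsUnitStep q) (h : Moves f v (v + q))
    (h' : Moves f (v + q) v) : ¬ Survives f (v - q) := by
  simpa [sub_eq_add_neg] using
    hf.not_survives_add_of_swap (v := v + q) hq.neg (by simpa using h') (by simpa using h)

theorem moves_add_or_moves_self (hq : IsUnitStep q) (hu : IsUnitStep u) (huq : u * q = 0)
    (h : Moves f v (v + q)) (hs : Survives f (v + u)) :
    Moves f (v + u) (v + u + q) ∨ Moves f (v + u) v := by
  have hne : q + -u ≠ 0 := hq.add_ne_zero_of_mul_eq_zero (by linear_combination -huq)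
  simpa using hf.moves_or_moves_of_adj (p := q) (q := -u) hs
    (by rwa [add_right_comm, add_neg_cancel_right]) (by simpa using hu.neg) hq hu.neg hne

-- Two edges of the square `v, v + q, v + u + q, v + u` turning `v + u → v → v + q` force the other
-- two to turn the same way, and then `v + u + q + q` has nowhere to go.
theorem not_survives_of_rotation (hq : IsUnitStep q) (hu : IsUnitStep u) (huq : u * q = 0)
    (h : Moves f v (v + q)) (h' : Moves f (v + u) v) (hs : Survives f (v + q))
    (hs' : Survives f (v + u + q)) : ¬ Survives f (v + u + q + q) := by
  intro hs''
  have hqu : q + u ≠ 0 := hq.add_ne_zero_of_mul_eq_zero (by linear_combination huq)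
  have hqu' : -q + u ≠ 0 := hq.neg.add_ne_zero_of_mul_eq_zero (by linear_combination -huq)
  have hfar : Moves f (v + u + q) (v + u) := by
    have hcorner := hf.moves_add_or_moves_self (v := v + u) (u := q) hu.neg hq
      (by linear_combination -huq) (by simpa using h') hs'
    refine hcorner.resolve_left fun hm => ?_
    rw [show v + u + q + -u = v + q by ring] at hm
    have heq := hf.left_unique hm h
    exact hqu (by linear_combination heq)
  have hnear : Moves f (v + q) (v + u + q) := by
    have hcorner := hf.moves_add_or_moves_self (v := v + u + q) (u := -u) hq.neg hu.neg
      (by linear_combination huq) (by simpa using hfar) (by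
        rwa [show v + u + q + -u = v + q by ring])
    rw [show v + u + q + -u = v + q by ring, add_neg_cancel_right] at hcorner
    refine hcorner.resolve_left fun hm => ?_
    have heq := hf.left_unique hm h'
    exact hqu' (by linear_combination -heq)
  have hmove := hf.moves_of_moves_add hq.neg hs'' (by simpa using hfar)
  rw [add_neg_cancel_right] at hmove
  have heq := hf.left_unique hnear hmove
  exact hqu (by linear_combination -heq)

theorem moves_add_of_mul_eq_zero (hq : IsUnitStep q) (hu : IsUnitStep u) (huq : u * q = 0)
    (h : Moves f v (v + q)) (hs : Survives f (v + u))
    (hroom : Survives f (v - q) ∨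
      Survives f (v + q) ∧ Survives f (v + u + q) ∧ Survives f (v + u + q + q)) :
    Moves f (v + u) (v + u + q) := by
  refine (hf.moves_add_or_moves_self hq hu huq h hs).resolve_right fun h' => ?_
  rcases hroom with hback | ⟨hnear, hfar, hfar'⟩
  · have hmove := hf.moves_of_moves_add hq hback (by rwa [sub_add_cancel])
    rw [sub_add_cancel] at hmove
    have heq := hf.left_unique h' hmove
    exact hq.add_ne_zero_of_mul_eq_zero (w := u) (by linear_combination huq)
      (by linear_combination heq)
  · exact hf.not_survives_of_rotation hq hu huq h h' hnear hfar hfar'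

end Local

end IsCandidateGridTranslation

/-! ### Full slabs -/

/-- Two consecutive layers of the grid, at heights `c` and `c + 1`. -/
def slab (ℓ : Fin d → ℕ) (h : (Fin d → ℤ) → ℤ) (c : ℤ) : Set (Fin d → ℤ) :=
  {v | InGrid d ℓ v ∧ (h v = c ∨ h v = c + 1)}

section SlabGeometry

variable {v u q : Fin d → ℤ} {i : Fin d} {c : ℤ}

theorem add_mem_slab (hv : v ∈ slab ℓ (· i) c) (hu : u i = 0) (hvu : InGrid d ℓ (v + u)) :
    v + u ∈ slab ℓ (· i) c :=
  ⟨hvu, by simpa [hu] using hv.2⟩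

theorem add_mem_slab_or_sub_mem_slab (hc : 0 ≤ c) (hcℓ : c + 1 < ℓ i) (hu : IsUnitStep u)
    (hv : v ∈ slab ℓ (· i) c) (hvu : InGrid d ℓ (v + u)) :
    v + u ∈ slab ℓ (· i) c ∨ v - u ∈ slab ℓ (· i) c := by
  obtain ⟨j, hu⟩ := hu
  by_cases hj : j = i
  · subst hj
    have hvj : v j = c ∨ v j = c + 1 := hv.2
    have hsub : ∀ s : ℤ, 0 ≤ v j - s ∧ v j - s < ℓ j → InGrid d ℓ (v - Pi.single j s) := by
      intro s hs
      rw [sub_eq_add_neg, ← Pi.single_neg, hv.1.add_single_iff]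
      omega
    rcases hu with rfl | rfl <;> rcases hvj with hvj | hvj
    · exact Or.inl ⟨hvu, by simp [hvj]⟩
    · exact Or.inr ⟨hsub _ (by omega), by simp [hvj]⟩
    · exact Or.inr ⟨hsub _ (by omega), by simp [hvj]⟩
    · exact Or.inl ⟨hvu, by simp [hvj]⟩
  · refine Or.inl (add_mem_slab hv ?_ hvu)
    rcases hu with rfl | rfl <;> simp [Ne.symm hj]

theorem InGrid.sub_or_add_add (hq : IsUnitStep q) (hlen : ∀ j, q j ≠ 0 → 3 ≤ ℓ j)
    (hv : InGrid d ℓ v) : InGrid d ℓ (v - q) ∨ InGrid d ℓ (v + (q + q)) := by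
  obtain ⟨j, rfl | rfl⟩ := hq <;>
  · have hj := hlen j (by simp)
    have hvj := hv j
    rw [sub_eq_add_neg, ← Pi.single_neg, ← Pi.single_add, hv.add_single_iff, hv.add_single_iff]
    omega

end SlabGeometry

namespace IsCandidateGridTranslation

section Slab

variable {v u q : Fin d → ℤ} {i : Fin d} {c : ℤ} (hf : IsCandidateGridTranslation d ℓ f)
  (hlen : ∀ j, j ≠ i → 3 ≤ ℓ j) (hfull : ∀ v ∈ slab ℓ (· i) c, Survives f v)
include hf hlen hfull

theorem moves_add_of_add_mem_slab (hq : IsUnitStep q) (hqi : q i = 0) (hu : IsUnitStep u)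
    (huq : u * q = 0) (hv : v ∈ slab ℓ (· i) c) (hvu : v + u ∈ slab ℓ (· i) c)
    (h : Moves f v (v + q)) : Moves f (v + u) (v + u + q) := by
  refine hf.moves_add_of_mul_eq_zero hq hu huq h (hfull _ hvu) ?_
  have hq3 : ∀ j, q j ≠ 0 → 3 ≤ ℓ j := fun j hj => hlen j fun hji => hj (hji ▸ hqi)
  rcases InGrid.sub_or_add_add hq hq3 hv.1 with hback | hahead
  · left
    rw [sub_eq_add_neg] at hback ⊢
    exact hfull _ (add_mem_slab hv (by simp [hqi]) hback)
  · refine Or.inr ⟨hfull _ (add_mem_slab hv hqi h.inGrid_right),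
      hfull _ (add_mem_slab hvu hqi (hvu.1.add_add h.inGrid_right huq)), ?_⟩
    rw [add_assoc]
    exact hfull _ (add_mem_slab hvu (by simp [hqi])
      (hvu.1.add_add hahead (by linear_combination 2 * huq)))

theorem not_moves_back_of_mem_slab (hq : IsUnitStep q) (hqi : q i = 0)
    (hv : v ∈ slab ℓ (· i) c) (h : Moves f v (v + q)) : ¬ Moves f (v + q) v := by
  intro h'
  have hq3 : ∀ j, q j ≠ 0 → 3 ≤ ℓ j := fun j hj => hlen j fun hji => hj (hji ▸ hqi)
  rcases InGrid.sub_or_add_add hq hq3 hv.1 with hback | hahead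
  · refine hf.not_survives_sub_of_swap hq h h' (hfull _ ?_)
    rw [sub_eq_add_neg] at hback ⊢
    exact add_mem_slab hv (by simp [hqi]) hback
  · refine hf.not_survives_add_of_swap hq h h' (hfull _ ?_)
    rw [add_assoc]
    exact add_mem_slab hv (by simp [hqi]) hahead

theorem moves_add_add_of_mem_slab (hc : 0 ≤ c) (hcℓ : c + 1 < ℓ i) (hq : IsUnitStep q)
    (hqi : q i = 0) (hv : v ∈ slab ℓ (· i) c) (h : Moves f v (v + q)) :
    Moves f (v + q) (v + q + q) := by
  have hvq : v + q ∈ slab ℓ (· i) c := add_mem_slab hv hqi h.inGrid_right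
  obtain ⟨x, hx⟩ := hfull _ hvq
  obtain ⟨u, rfl⟩ : ∃ u, x = v + q + u := ⟨x - (v + q), by ring⟩
  have hu : IsUnitStep u := by simpa using hf.isUnitStep_sub hx
  rcases hu.eq_or_eq_neg_or_mul_eq_zero hq with rfl | rfl | huq
  · exact hx
  · rw [add_neg_cancel_right] at hx
    exact absurd hx (hf.not_moves_back_of_mem_slab hlen hfull hq hqi hv h)
  exfalso
  have hqu : q + -u ≠ 0 := hq.add_ne_zero_of_mul_eq_zero (by linear_combination -huq)
  have hvu : InGrid d ℓ (v + u) := by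
    have := InGrid.add_add (v := v + q) (u := -q) (by simpa using hv.1) hx.inGrid_right
      (by linear_combination -huq)
    simpa using this
  rcases add_mem_slab_or_sub_mem_slab hc hcℓ hu hv hvu with hslab | hslab
  · have hmove := hf.moves_add_of_add_mem_slab hlen hfull hq hqi hu huq hv hslab h
    rw [add_right_comm] at hmove
    have heq := hf.left_unique hmove hx
    exact hqu (by linear_combination -heq)
  · rw [sub_eq_add_neg] at hslab
    have hside := hf.moves_add_of_add_mem_slab hlen hfull hq hqi hu.neg
      (by linear_combination -huq) hv hslab h
    have hmove := hf.moves_of_moves_add hu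
      (hfull _ (add_mem_slab hslab hqi hside.inGrid_right))
      (by rwa [show v + -u + q + u = v + q by ring])
    rw [show v + -u + q + u = v + q by ring] at hmove
    have heq := hf.left_unique h hmove
    exact hqu (by linear_combination -heq)

-- A move along the slab would propagate forever in its direction.
theorem not_moves_of_mem_slab (hc : 0 ≤ c) (hcℓ : c + 1 < ℓ i) (hq : IsUnitStep q)
    (hqi : q i = 0) (hv : v ∈ slab ℓ (· i) c) : ¬ Moves f v (v + q) := by
  intro h
  have hfin : {w | w ∈ slab ℓ (· i) c ∧ Moves f w (w + q)}.Finite :=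
    (finite_setOf_inGrid ℓ).subset fun _ hw => hw.1.1
  obtain ⟨w, ⟨hw, hmove⟩, hmax⟩ := Set.exists_max_image _ (· ⬝ᵥ q) hfin ⟨v, hv, h⟩
  have hle := hmax (w + q) ⟨add_mem_slab hw hqi hmove.inGrid_right,
    hf.moves_add_add_of_mem_slab hlen hfull hc hcℓ hq hqi hw hmove⟩
  rw [add_dotProduct, hq.dotProduct_self] at hle
  omega

theorem moves_vertically_of_mem_slab (hc : 0 ≤ c) (hcℓ : c + 1 < ℓ i)
    (hv : v ∈ slab ℓ (· i) c) :
    Moves f v (v + Pi.single i 1) ∨ Moves f v (v - Pi.single i 1) := by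
  obtain ⟨w, hw⟩ := hfull v hv
  obtain ⟨q, rfl⟩ : ∃ q, w = v + q := ⟨w - v, by ring⟩
  have hq : IsUnitStep q := by simpa using hf.isUnitStep_sub hw
  by_cases hqi : q i = 0
  · exact absurd hw (hf.not_moves_of_mem_slab hlen hfull hc hcℓ hq hqi hv)
  · obtain ⟨j, hj⟩ := hq
    obtain rfl : i = j := by
      by_contra hij
      rcases hj with rfl | rfl <;> simp [hij] at hqi
    rcases hj with rfl | rfl
    · exact Or.inl hw
    · exact Or.inr (by rwa [Pi.single_neg, ← sub_eq_add_neg] at hw)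

end Slab

end IsCandidateGridTranslation

/-! ### Propagation of a shift -/

/-- `h` is a height function for the unit step `e` on a grid with `L` layers: a step `e` raises the
height by one, a step `-e` lowers it by one and all other unit steps preserve it; one can step up
from every layer but the top one and down from every layer but the bottom one. -/
structure IsHeight (ℓ : Fin d → ℕ) (L : ℤ) (e : Fin d → ℤ) (h : (Fin d → ℤ) → ℤ) : Prop where
  isUnitStep : IsUnitStep e
  nonneg : ∀ {v}, InGrid d ℓ v → 0 ≤ h v
  lt : ∀ {v}, InGrid d ℓ v → h v < L
  map_add : ∀ v, h (v + e) = h v + 1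
  map_eq_of_isUnitStep : ∀ {v u}, IsUnitStep u → u = e ∨ u = -e ∨ h (v + u) = h v
  add_mem : ∀ {v}, InGrid d ℓ v → h v + 1 < L → InGrid d ℓ (v + e)
  sub_mem : ∀ {v}, InGrid d ℓ v → 1 ≤ h v → InGrid d ℓ (v - e)

namespace IsHeight

variable {L : ℤ} {e v : Fin d → ℤ} {h : (Fin d → ℤ) → ℤ}

theorem map_sub (H : IsHeight ℓ L e h) (v : Fin d → ℤ) : h (v - e) = h v - 1 := by
  have := H.map_add (v - e)
  rw [sub_add_cancel] at this
  omega

theorem coord (ℓ : Fin d → ℕ) (i : Fin d) : IsHeight ℓ (ℓ i) (Pi.single i 1) (· i) where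
  isUnitStep := .single_one i
  nonneg hv := (hv i).1
  lt hv := (hv i).2
  map_add v := by simp
  map_eq_of_isUnitStep {v u} hu := by
    rcases hu.eq_or_eq_neg_or_mul_eq_zero (.single_one i) with hu | hu | hu
    · exact Or.inl hu
    · exact Or.inr (Or.inl hu)
    · have : u i = 0 := by simpa using congrFun hu i
      exact Or.inr (Or.inr (by simp [this]))
  add_mem {v} hv h := by
    have := hv i
    rw [hv.add_single_iff]
    omega
  sub_mem {v} hv h := by
    have := hv i
    rw [sub_eq_add_neg, ← Pi.single_neg, hv.add_single_iff]
    omega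

theorem reverse (H : IsHeight ℓ L e h) : IsHeight ℓ L (-e) (fun v => L - 1 - h v) where
  isUnitStep := H.isUnitStep.neg
  nonneg hv := by
    have := H.lt hv
    omega
  lt hv := by
    have := H.nonneg hv
    omega
  map_add v := by
    rw [← sub_eq_add_neg, H.map_sub]
    ring
  map_eq_of_isUnitStep {v u} hu := by
    rcases H.map_eq_of_isUnitStep (v := v) hu with rfl | rfl | h
    · exact Or.inr (Or.inl (neg_neg u).symm)
    · exact Or.inl rfl
    · exact Or.inr (Or.inr (by rw [h]))
  add_mem hv h := by
    rw [← sub_eq_add_neg]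
    exact H.sub_mem hv (by omega)
  sub_mem hv h := by
    rw [sub_neg_eq_add]
    exact H.add_mem hv (by omega)

end IsHeight

theorem slab_reverse (ℓ : Fin d → ℕ) (L : ℤ) (h : (Fin d → ℤ) → ℤ) (c : ℤ) :
    slab ℓ (fun v => L - 1 - h v) (L - 2 - c) = slab ℓ h c := by
  ext v
  refine and_congr_right fun _ => ?_
  dsimp only
  omega

theorem layer_reverse (ℓ : Fin d → ℕ) (L : ℤ) (h : (Fin d → ℤ) → ℤ) (c : ℤ) :
    layer ℓ (fun v => L - 1 - h v) c = layer ℓ h (L - 1 - c) := by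
  ext v
  refine and_congr_right fun _ => ?_
  dsimp only
  omega

/-- `f` moves all vertices of height at most `m` by the step `e`. -/
def ShiftsUpTo (f : {v : Fin d → ℤ // InGrid d ℓ v} → Option {v : Fin d → ℤ // InGrid d ℓ v})
    (h : (Fin d → ℤ) → ℤ) (e : Fin d → ℤ) (m : ℤ) : Prop :=
  ∀ a, InGrid d ℓ a → h a ≤ m → Moves f a (a + e)

namespace IsCandidateGridTranslation

variable (hf : IsCandidateGridTranslation d ℓ f)
include hf

theorem ncard_le_ncard_inter_lost {R Q : Set (Fin d → ℤ)} (hR : R ⊆ {a | InGrid d ℓ a})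
    (hQ : Q ⊆ R) (hmap : ∀ a b, a ∈ R → Moves f a b → b ∈ R \ Q) :
    Q.ncard ≤ (R ∩ lost f).ncard := by
  have hfin : R.Finite := (finite_setOf_inGrid ℓ).subset hR
  have hsurv : ∀ a ∈ R \ lost f, ∃ b, Moves f a b := fun a ha =>
    not_not.mp fun hs => ha.2 ⟨hR ha.1, hs⟩
  choose! g hg using hsurv
  have hle : (R \ lost f).ncard ≤ (R \ Q).ncard :=
    Set.ncard_le_ncard_of_injOn g (fun a ha => hmap a _ ha.1 (hg a ha))
      (fun a ha b hb hab => hf.left_unique (hg a ha) (hab ▸ hg b hb)) hfin.sdiff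
  have h1 := Set.ncard_inter_add_ncard_sdiff_eq_ncard R (lost f) hfin
  have h2 := Set.ncard_sdiff_add_ncard_of_subset hQ hfin
  omega

section Ascent

variable {L c m : ℤ} {e a b x : Fin d → ℤ} {h : (Fin d → ℤ) → ℤ} (H : IsHeight ℓ L e h)
include H

theorem eq_add_or_eq_sub_or_height_eq (hab : Moves f a b) :
    b = a + e ∨ b = a - e ∨ h b = h a := by
  obtain ⟨u, rfl⟩ : ∃ u, b = a + u := ⟨b - a, by ring⟩
  refine (H.map_eq_of_isUnitStep (v := a) (by simpa using hf.isUnitStep_sub hab)).imp ?_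
    (Or.imp_left ?_)
  · rintro rfl
    rfl
  · rintro rfl
    rw [sub_eq_add_neg]

theorem height_sub_one_le_of_moves (hab : Moves f a b) : h a - 1 ≤ h b := by
  rcases hf.eq_add_or_eq_sub_or_height_eq H hab with rfl | rfl | hb
  · rw [H.map_add]
    omega
  · rw [H.map_sub]
  · omega

theorem add_two_lt_height_of_moves (hslab : ∀ v ∈ slab ℓ h c, Moves f v (v + e)) (hc : 0 ≤ c)
    (hab : Moves f a b) (ha : c + 1 < h a) : c + 2 < h b := by
  by_contra! hb
  have hba := hf.height_sub_one_le_of_moves H hab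
  have hpre := H.map_sub b
  have hmove := hslab (b - e) ⟨H.sub_mem hab.inGrid_right (by omega), by omega⟩
  rw [sub_add_cancel] at hmove
  rw [hf.left_unique hab hmove] at ha
  omega

-- The vertices of height at least `c + 1` are mapped to height at least `c + 2`, so that as many of
-- them are lost as there are in layer `c + 1`.
theorem lt_height_of_mem_lost (hslab : ∀ v ∈ slab ℓ h c, Moves f v (v + e)) (hc : 0 ≤ c)
    (hlost : (lost f).ncard ≤ (layer ℓ h (c + 1)).ncard) (ha : a ∈ lost f) : c < h a := by
  have hcount : (layer ℓ h (c + 1)).ncard ≤ ({v | InGrid d ℓ v ∧ c < h v} ∩ lost f).ncard := by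
    refine hf.ncard_le_ncard_inter_lost (fun _ hv => hv.1) (fun v hv => ⟨hv.1, hv.2 ▸ by omega⟩) ?_
    rintro a b ⟨ha, hca⟩ hab
    suffices c + 1 < h b from ⟨⟨hab.inGrid_right, by omega⟩, fun hb => this.ne' hb.2⟩
    by_cases hac : h a = c + 1
    · rw [hab.right_unique (hslab a ⟨ha, Or.inr hac⟩), H.map_add]
      omega
    · have := hf.add_two_lt_height_of_moves H hslab hc hab (by omega)
      omega
  have heq := Set.eq_of_subset_of_ncard_le Set.inter_subset_right (hlost.trans hcount) finite_lost
  rw [← heq] at ha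
  exact ha.1.2

theorem shiftsUpTo_of_slab (hslab : ∀ v ∈ slab ℓ h c, Moves f v (v + e)) (hcL : c + 1 < L)
    (hsurv : ∀ a, InGrid d ℓ a → h a ≤ c → Survives f a) : ShiftsUpTo f h e (c + 1) := by
  suffices ∀ (n : ℕ) a, InGrid d ℓ a → h a = c + 1 - n → Moves f a (a + e) from
    fun a ha hac => this (c + 1 - h a).toNat a ha (by omega)
  intro n
  induction n with
  | zero => exact fun a ha hac => hslab a ⟨ha, Or.inr (by simpa using hac)⟩
  | succ n ih =>
    intro a ha hac
    push_cast at hac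
    exact hf.moves_of_moves_add H.isUnitStep (hsurv a ha (by omega))
      (ih _ (H.add_mem ha (by omega)) (by rw [H.map_add]; omega))

section ShiftsUpTo

variable (hm : ShiftsUpTo f h e m)
include hm

theorem eq_add_of_moves_of_height_le (hab : Moves f a b) (hb : 1 ≤ h b) (hbm : h b ≤ m + 1) :
    b = a + e := by
  have hmove := hm (b - e) (H.sub_mem hab.inGrid_right hb) (by rw [H.map_sub]; omega)
  rw [sub_add_cancel] at hmove
  rw [hf.left_unique hab hmove, sub_add_cancel]

theorem moves_of_survives_of_height_eq (hm1 : 1 ≤ m) (ham : h a = m + 1) (ha : Survives f a) :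
    Moves f a (a + e) := by
  obtain ⟨b, hab⟩ := ha
  suffices b = a + e from this ▸ hab
  rcases hf.eq_add_or_eq_sub_or_height_eq H hab with hb | hb | hb
  · exact hb
  · have := H.map_sub a
    rw [← hb] at this
    exact hf.eq_add_of_moves_of_height_le H hm hab (by omega) (by omega)
  · exact hf.eq_add_of_moves_of_height_le H hm hab (by omega) (by omega)

theorem not_moves_add_of_not_survives (hm0 : 0 ≤ m) (hga : InGrid d ℓ a) (ham : h a = m + 1)
    (ha : ¬ Survives f a) : ¬ Moves f x (a + e) := by
  intro hx
  have hpred := hm (a - e) (H.sub_mem hga (by omega)) (by rw [H.map_sub]; omega)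
  rw [sub_add_cancel] at hpred
  have hstep : IsUnitStep (x - (a - e)) :=
    (hf.isUnitStep_sub_iff hpred hx).mpr (by simpa using H.isUnitStep)
  have heq := IsUnitStep.eq_or_eq_of_add_eq_add hstep (hf.isUnitStep_sub hx) H.isUnitStep
    H.isUnitStep (by ring) H.isUnitStep.add_self_ne_zero
  obtain rfl : x = a := by linear_combination heq.elim id id
  exact ha hx.survives

-- A lost vertex `a` of height `m + 1` would leave the whole layer `m + 1` and also `a + e` outside
-- the image of the vertices above height `m`: more vertices than `f` loses.
theorem shiftsUpTo_add_one (hm1 : 1 ≤ m) (hmL : m + 2 < L)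
    (hlost : (lost f).ncard ≤ (layer ℓ h (m + 1)).ncard) : ShiftsUpTo f h e (m + 1) := by
  intro a hga ha
  by_cases ham : h a ≤ m
  · exact hm a hga ham
  replace ham : h a = m + 1 := by omega
  refine hf.moves_of_survives_of_height_eq H hm hm1 ham (not_not.mp fun hsurv => ?_)
  have hgae := H.add_mem hga (by omega)
  have hae := H.map_add a
  have hcount : (insert (a + e) (layer ℓ h (m + 1))).ncard ≤
      ({v | InGrid d ℓ v ∧ m < h v} ∩ lost f).ncard := by
    refine hf.ncard_le_ncard_inter_lost (fun _ hv => hv.1) ?_ ?_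
    · rintro v (rfl | hv)
      · exact ⟨hgae, by omega⟩
      · exact ⟨hv.1, hv.2 ▸ by omega⟩
    · rintro x b ⟨-, hmx⟩ hxb
      have hslab : ∀ v ∈ slab ℓ h (m - 1), Moves f v (v + e) := fun v hv =>
        hm v hv.1 (by have := hv.2; omega)
      have hb := hf.add_two_lt_height_of_moves H hslab (by omega) hxb (by omega)
      refine ⟨⟨hxb.inGrid_right, by omega⟩, ?_⟩
      rintro (rfl | hb')
      · exact hf.not_moves_add_of_not_survives H hm (by omega) hga ham hsurv hxb
      · have := hb'.2
        omega
  have hnotMem : a + e ∉ layer ℓ h (m + 1) := fun hmem => by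
    have := hmem.2
    omega
  rw [Set.ncard_insert_of_notMem hnotMem (finite_layer ℓ h _)] at hcount
  have := Set.ncard_le_ncard (Set.inter_subset_right (s := {v | InGrid d ℓ v ∧ m < h v}))
    (finite_lost (f := f))
  omega

end ShiftsUpTo

variable (hlost : ∀ k, 0 ≤ k → k < L → (lost f).ncard ≤ (layer ℓ h k).ncard)
include hlost

theorem shiftsUpTo_of_slab_of_lost (hslab : ∀ v ∈ slab ℓ h c, Moves f v (v + e)) (hc : 0 ≤ c)
    (hcL : c + 1 < L) : ShiftsUpTo f h e (L - 2) := by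
  have hbase : ShiftsUpTo f h e (c + 1) := by
    refine hf.shiftsUpTo_of_slab H hslab hcL fun a ha hac => not_not.mp fun hs => ?_
    have := hf.lt_height_of_mem_lost H hslab hc (hlost _ (by omega) hcL) ⟨ha, hs⟩
    omega
  have hall : ∀ m, c + 1 ≤ m → m ≤ L - 2 → ShiftsUpTo f h e m := by
    intro m hm
    induction m, hm using Int.leInduction with
    | base => exact fun _ => hbase
    | succ m hm ih =>
      exact fun hmL => hf.shiftsUpTo_add_one H (ih (by omega)) (by omega) (by omega)
        (hlost _ (by omega) (by omega))
  by_cases hcL2 : c + 1 ≤ L - 2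
  · exact hall _ hcL2 le_rfl
  · exact fun a ha hac => hbase a ha (by omega)

theorem height_lt_of_moves (hslab : ∀ v ∈ slab ℓ h c, Moves f v (v + e)) (hc : 0 ≤ c)
    (hcL : c + 1 < L) (hL : 3 ≤ L) (hab : Moves f a b) : h a < h b := by
  have hshift := hf.shiftsUpTo_of_slab_of_lost H hlost hslab hc hcL
  suffices b = a + e by
    rw [this, H.map_add]
    omega
  by_cases ha : h a ≤ L - 2
  · exact hab.right_unique (hshift a hab.inGrid_left ha)
  · have hba := hf.height_sub_one_le_of_moves H hab
    have hb := H.lt hab.inGrid_right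
    exact hf.eq_add_of_moves_of_height_le H hshift hab (by omega) (by omega)

end Ascent

end IsCandidateGridTranslation

/-! ### The dichotomy for full slabs -/

section LayerConnected

variable {v w : Fin d → ℤ} {i : Fin d} {c : ℤ}

theorem layer_induction {p : (Fin d → ℤ) → Prop}
    (hstep : ∀ v u, IsUnitStep u → v ∈ layer ℓ (· i) c → v + u ∈ layer ℓ (· i) c →
      p v → p (v + u))
    (hv : v ∈ layer ℓ (· i) c) (hpv : p v) (hw : w ∈ layer ℓ (· i) c) : p w := by
  obtain ⟨x, ⟨hx, hpx⟩, hmin⟩ := Set.exists_min_image {x | x ∈ layer ℓ (· i) c ∧ p x}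
    (fun x => ∑ j, |w j - x j|) ((finite_layer ℓ _ c).subset fun _ hx => hx.1) ⟨v, hv, hpv⟩
  by_contra hpw
  obtain ⟨j, hj⟩ : ∃ j, x j ≠ w j := Function.ne_iff.mp fun h => hpw (h ▸ hpx)
  have hji : j ≠ i := by
    rintro rfl
    exact hj (hx.2.trans hw.2.symm)
  obtain ⟨s, hs, hcloser, hgrid⟩ : ∃ s : ℤ, (s = 1 ∨ s = -1) ∧ |w j - (x j + s)| < |w j - x j| ∧
      0 ≤ x j + s ∧ x j + s < ℓ j := by
    have hxj := hx.1 j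
    have hwj := hw.1 j
    rcases hj.lt_or_gt with hlt | hlt
    · exact ⟨1, Or.inl rfl, by grind, by omega, by omega⟩
    · exact ⟨-1, Or.inr rfl, by grind, by omega, by omega⟩
  have hmem : x + Pi.single j s ∈ layer ℓ (· i) c :=
    ⟨hx.1.add_single_iff.mpr hgrid, by simpa [hji.symm] using hx.2⟩
  have hle := hmin _ ⟨hmem, hstep x _ ⟨j, hs.imp (congrArg _) (congrArg _)⟩ hx hmem hpx⟩
  refine hle.not_gt (Finset.sum_lt_sum (fun k _ => ?_)
    ⟨j, Finset.mem_univ j, by simpa using hcloser⟩)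
  by_cases hk : k = j
  · subst hk
    simpa using hcloser.le
  · simp [hk]

end LayerConnected

/-- Some function strictly increases along every move of `f`, so that every orbit ends in the black
hole. -/
def Ascends (f : {v : Fin d → ℤ // InGrid d ℓ v} → Option {v : Fin d → ℤ // InGrid d ℓ v}) :
    Prop :=
  ∃ h : (Fin d → ℤ) → ℤ, ∀ a b, Moves f a b → h a < h b

theorem exists_full_slab {P : ℕ} (hlost : (lost f).ncard ≤ P) (h : (Fin d → ℤ) → ℤ) :
    ∃ k : ℕ, k ≤ P ∧ ∀ v ∈ slab ℓ h (2 * k), Survives f v := by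
  have hcard : ((fun v => h v / 2) '' lost f).ncard < ((↑) '' Set.Iic P : Set ℤ).ncard := by
    rw [Set.ncard_image_of_injective _ Nat.cast_injective, ← Finset.coe_Iic,
      Set.ncard_coe_finset, Nat.card_Iic]
    exact Nat.lt_succ_of_le ((Set.ncard_image_le finite_lost).trans hlost)
  obtain ⟨_, ⟨k, hk, rfl⟩, hnot⟩ :=
    Set.exists_mem_notMem_of_ncard_lt_ncard hcard (finite_lost.image _)
  refine ⟨k, hk, fun v hv => not_not.mp fun hs => hnot ⟨v, ⟨hv.1, hs⟩, ?_⟩⟩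
  have := hv.2
  dsimp only
  omega

namespace IsCandidateGridTranslation

variable {i : Fin d} {c : ℤ} (hf : IsCandidateGridTranslation d ℓ f)
include hf

theorem forall_layer_moves_add_or_sub
    (hvert : ∀ v ∈ layer ℓ (· i) c,
      Moves f v (v + Pi.single i 1) ∨ Moves f v (v - Pi.single i 1)) :
    (∀ v ∈ layer ℓ (· i) c, Moves f v (v + Pi.single i 1)) ∨
      ∀ v ∈ layer ℓ (· i) c, Moves f v (v - Pi.single i 1) := by
  by_cases hup : ∃ v ∈ layer ℓ (· i) c, Moves f v (v + Pi.single i 1)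
  · obtain ⟨v, hv, hmove⟩ := hup
    refine Or.inl fun w hw => layer_induction (p := fun x => Moves f x (x + Pi.single i 1))
      (fun x u hu hx hxu hxmove => ?_) hv hmove hw
    refine (hvert _ hxu).resolve_right fun hdown => ?_
    have hstep := (hf.isUnitStep_sub_iff hxmove hdown).mp (by simpa using hu)
    have hui : u i = 0 := by
      have h1 : x i = c := hx.2
      have h2 : x i + u i = c := hxu.2
      omega
    have habs := (abs_le.mp (hstep.abs_apply_le_one i)).1
    simp [hui] at habs
  · exact Or.inr fun v hv => (hvert v hv).resolve_left fun h => hup ⟨v, hv, h⟩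

theorem layer_union_layer_subset_lost_of_swap {L : ℤ} {e : Fin d → ℤ} {h : (Fin d → ℤ) → ℤ}
    (H : IsHeight ℓ L e h) (hc : 0 ≤ c) (hcL : c + 1 < L)
    (hup : ∀ v ∈ layer ℓ h c, Moves f v (v + e))
    (hdown : ∀ v ∈ layer ℓ h (c + 1), Moves f v (v - e)) :
    layer ℓ h (c - 1) ∪ layer ℓ h (c + 2) ⊆ lost f := by
  have hback : ∀ v ∈ layer ℓ h c, Moves f (v + e) v := fun v hv => by
    simpa using hdown (v + e) ⟨(hup v hv).inGrid_right, by rw [H.map_add, hv.2]⟩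
  rintro a (⟨ha, hac⟩ | ⟨ha, hac⟩) <;> refine ⟨ha, ?_⟩
  · have hv : a + e ∈ layer ℓ h c := ⟨H.add_mem ha (by omega), by rw [H.map_add]; omega⟩
    simpa using hf.not_survives_sub_of_swap H.isUnitStep (hup _ hv) (hback _ hv)
  · have hv : a - e - e ∈ layer ℓ h c :=
      ⟨H.sub_mem (H.sub_mem ha (by omega)) (by rw [H.map_sub]; omega), by
        rw [H.map_sub, H.map_sub]
        omega⟩
    simpa using hf.not_survives_add_of_swap H.isUnitStep (hup _ hv) (hback _ hv)

variable (hlen : ∀ j, j ≠ i → 3 ≤ ℓ j)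
  (hlost : (lost f).ncard ≤ ∏ j ∈ Finset.univ.erase i, ℓ j)
include hlen hlost

theorem ascends_or_subset_lost (hfull : ∀ v ∈ slab ℓ (· i) c, Survives f v) (hc : 0 ≤ c)
    (hcℓ : c + 1 < ℓ i) (hℓi : 3 ≤ ℓ i) :
    Ascends f ∨ layer ℓ (· i) (c - 1) ∪ layer ℓ (· i) (c + 2) ⊆ lost f := by
  have H := IsHeight.coord ℓ i
  have hlay : ∀ k, 0 ≤ k → k < (ℓ i : ℤ) → (lost f).ncard ≤ (layer ℓ (· i) k).ncard :=
    fun k hk hkℓ => (ncard_layer ℓ i hk hkℓ).symm ▸ hlost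
  have hvert := fun v hv => hf.moves_vertically_of_mem_slab hlen hfull hc hcℓ (v := v) hv
  rcases hf.forall_layer_moves_add_or_sub (c := c + 1) fun v hv => hvert v ⟨hv.1, Or.inr hv.2⟩
    with hupper | hupper
  · refine Or.inl ⟨(· i), fun a b => hf.height_lt_of_moves H hlay (c := c) ?_ hc hcℓ (by omega)⟩
    rintro v ⟨hv, (hvi : v i = c) | hvi⟩
    · exact hf.moves_of_moves_add H.isUnitStep (hfull v ⟨hv, Or.inl hvi⟩)
        (hupper _ ⟨H.add_mem hv (by omega), by simp [hvi]⟩)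
    · exact hupper v ⟨hv, hvi⟩
  rcases hf.forall_layer_moves_add_or_sub (c := c) fun v hv => hvert v ⟨hv.1, Or.inl hv.2⟩
    with hlower | hlower
  · exact Or.inr (hf.layer_union_layer_subset_lost_of_swap H hc hcℓ hlower hupper)
  · refine Or.inl ⟨fun v => ℓ i - 1 - v i, fun a b =>
      hf.height_lt_of_moves H.reverse (c := ℓ i - 2 - c) (fun k hk hkℓ => ?_) ?_ (by omega)
        (by omega) (by omega)⟩
    · rw [layer_reverse]
      exact hlay _ (by omega) (by omega)
    · rw [slab_reverse]
      intro v hv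
      rw [← sub_eq_add_neg]
      exact hv.2.elim (fun h => hlower v ⟨hv.1, h⟩) fun h => hupper v ⟨hv.1, h⟩

theorem ascends_of_interior_slab (hfull : ∀ v ∈ slab ℓ (· i) c, Survives f v) (hc : 1 ≤ c)
    (hcℓ : c + 2 < ℓ i) : Ascends f := by
  refine (hf.ascends_or_subset_lost hlen hlost hfull (by omega) (by omega) (by omega)).resolve_right
    fun hsub => ?_
  have hpos : 0 < ∏ j ∈ Finset.univ.erase i, ℓ j := Finset.prod_pos fun j hj => by
    have := hlen j (Finset.ne_of_mem_erase hj)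
    omega
  have hdisj : Disjoint (layer ℓ (· i) (c - 1)) (layer ℓ (· i) (c + 2)) :=
    Set.disjoint_left.mpr fun v hv hv' => by
      have := hv.2.symm.trans hv'.2
      omega
  have hcard := Set.ncard_le_ncard hsub finite_lost
  rw [Set.ncard_union_eq hdisj (finite_layer ..) (finite_layer ..),
    ncard_layer ℓ i (by omega) (by omega), ncard_layer ℓ i (by omega) (by omega)] at hcard
  omega

theorem ascends_of_layer_subset_lost (hsub : layer ℓ (· i) c ⊆ lost f) (hc : 0 ≤ c) (hcℓ : c < ℓ i)
    (hc3 : c < 3 ∨ 4 < c) (hℓi : 5 < ℓ i) : Ascends f := by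
  have heq := Set.eq_of_subset_of_ncard_le hsub (by rwa [ncard_layer ℓ i hc hcℓ]) finite_lost
  refine hf.ascends_of_interior_slab hlen hlost (c := 3)
    (fun v hv => not_not.mp fun hs => ?_) (by omega) (by omega)
  have hmem : v ∈ layer ℓ (· i) c := heq ▸ ⟨hv.1, hs⟩
  have := hmem.2
  have := hv.2
  omega

-- A full slab at the boundary may be swapped with itself at the cost of the layer next to it, but
-- then nothing else is lost and there is another full slab in the interior.
theorem ascends (hprod : 3 ≤ ∏ j ∈ Finset.univ.erase i, ℓ j)
    (hlong : 2 * ∏ j ∈ Finset.univ.erase i, ℓ j + 2 ≤ ℓ i) : Ascends f := by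
  obtain ⟨k, hk, hfull⟩ := exists_full_slab hlost (· i)
  rcases hf.ascends_or_subset_lost hlen hlost hfull (by omega) (by omega) (by omega) with h | hsub
  · exact h
  rw [Set.union_subset_iff] at hsub
  by_cases hk0 : k = 0
  · exact hf.ascends_of_layer_subset_lost hlen hlost hsub.2 (by omega) (by omega) (by omega)
      (by omega)
  by_cases hkℓ : 2 * k + 2 < ℓ i
  · exact hf.ascends_of_interior_slab hlen hlost hfull (by omega) (by omega)
  · exact hf.ascends_of_layer_subset_lost hlen hlost hsub.1 (by omega) (by omega) (by omega)
      (by omega)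

end IsCandidateGridTranslation

/-! ### Maximality -/

theorem ncard_lost_add_ncard_ne_none
    (f : {v : Fin d → ℤ // InGrid d ℓ v} → Option {v : Fin d → ℤ // InGrid d ℓ v}) :
    (lost f).ncard + {v | f v ≠ none}.ncard = Nat.card {v : Fin d → ℤ // InGrid d ℓ v} := by
  have : Finite {v : Fin d → ℤ // InGrid d ℓ v} := finite_setOf_inGrid ℓ
  have himage : lost f = Subtype.val '' {v | f v ≠ none}ᶜ := by
    ext a
    simp only [lost, Survives, Moves, Set.mem_ofPred_eq, Set.mem_image, Set.mem_compl_iff, not_not,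
      Option.eq_none_iff_forall_ne_some, Subtype.exists, Subtype.forall, not_exists]
    exact ⟨fun ⟨ha, hs⟩ => ⟨a, ha, fun b hb => hs b ha hb, rfl⟩, by
      rintro ⟨a, ha, hs, rfl⟩
      exact ⟨ha, fun b _ hb => hs b hb⟩⟩
  rw [himage, Set.ncard_image_of_injective _ Subtype.val_injective, add_comm,
    Set.ncard_add_ncard_compl]

open scoped Classical in
/-- The translation of the grid by one step along the `i`-th axis, which sends exactly the last
layer to the black hole. -/
noncomputable def gridShift (ℓ : Fin d → ℕ) (i : Fin d) (v : {v : Fin d → ℤ // InGrid d ℓ v}) :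
    Option {v : Fin d → ℤ // InGrid d ℓ v} :=
  if h : InGrid d ℓ (v.1 + Pi.single i 1) then some ⟨v.1 + Pi.single i 1, h⟩ else none

theorem gridShift_eq_some_iff {i : Fin d} {v w : {v : Fin d → ℤ // InGrid d ℓ v}} :
    gridShift ℓ i v = some w ↔ w.1 = v.1 + Pi.single i 1 := by
  unfold gridShift
  split_ifs with h
  · simp [Subtype.ext_iff, eq_comm]
  · simp only [false_iff]
    exact fun hw => h (hw ▸ w.2)

theorem isCandidateGridTranslation_gridShift (ℓ : Fin d → ℕ) (i : Fin d) :
    IsCandidateGridTranslation d ℓ (gridShift ℓ i) where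
  inj v w x hv hw := by
    rw [gridShift_eq_some_iff] at hv hw
    exact Subtype.ext (add_right_cancel (hv.symm.trans hw))
  adj_map v w hv := by
    rw [gridShift_eq_some_iff] at hv
    rw [taxiAdj_iff, hv, add_sub_cancel_left]
    exact .single_one i
  pres v₁ v₂ w₁ w₂ h₁ h₂ := by
    rw [gridShift_eq_some_iff] at h₁ h₂
    rw [taxiAdj_iff, taxiAdj_iff, h₁, h₂, add_sub_add_right_eq_sub]

theorem lost_gridShift_subset (ℓ : Fin d → ℕ) (i : Fin d) :
    lost (gridShift ℓ i) ⊆ layer ℓ (· i) (ℓ i - 1) := by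
  rintro a ⟨ha, hs⟩
  have hnot : ¬ InGrid d ℓ (a + Pi.single i 1) := fun h =>
    hs ⟨_, ha, h, gridShift_eq_some_iff.mpr rfl⟩
  rw [ha.add_single_iff] at hnot
  have hai := ha i
  refine ⟨ha, ?_⟩
  dsimp only
  omega

theorem ncard_lost_le_of_maximal {i : Fin d} (hi : 0 < ℓ i)
    (hmax : ∀ g, IsCandidateGridTranslation d ℓ g →
      Set.ncard {v | g v ≠ none} ≤ Set.ncard {v | f v ≠ none}) :
    (lost f).ncard ≤ ∏ j ∈ Finset.univ.erase i, ℓ j := by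
  have hle := hmax _ (isCandidateGridTranslation_gridShift ℓ i)
  have hf := ncard_lost_add_ncard_ne_none f
  have hg := ncard_lost_add_ncard_ne_none (gridShift ℓ i)
  have hlayer := Set.ncard_le_ncard (lost_gridShift_subset ℓ i) (finite_layer ..)
  rw [ncard_layer ℓ i (by omega) (by omega)] at hlayer
  omega

/-! ### Orbits -/

section Orbit

variable {α : Type*} {g : α → Option α} {a : α}

theorem exists_orbit (ha : ∀ n, (fun o => Option.bind o g)^[n] (some a) ≠ none) :
    ∃ x : ℕ → α, ∀ n, (fun o => Option.bind o g)^[n] (some a) = some (x n) ∧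
      g (x n) = some (x (n + 1)) := by
  choose x hx using fun n => Option.ne_none_iff_exists'.mp (ha n)
  refine ⟨x, fun n => ⟨hx n, ?_⟩⟩
  rw [← hx (n + 1), Function.iterate_succ_apply', hx n, Option.bind_some]

theorem exists_iterate_eq_none_of_lt [Finite α] {h : α → ℤ}
    (hlt : ∀ a b, g a = some b → h a < h b) (a : α) :
    ∃ n, (fun o => Option.bind o g)^[n] (some a) = none := by
  by_contra! ha
  obtain ⟨x, hx⟩ := exists_orbit ha
  have hmono : StrictMono (h ∘ x) := strictMono_nat_of_lt_succ fun n => hlt _ _ (hx n).2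
  exact not_injective_infinite_finite x hmono.injective.of_comp

end Orbit

theorem exists_add_two_eq_of_finite_range {y : ℕ → ℤ} (hfin : (Set.range y).Finite)
    (hstep : ∀ n, |y (n + 1) - y n| = 1) : ∃ n, y (n + 2) = y n := by
  by_contra! hne
  have hconst : ∀ n, y (n + 1) - y n = y 1 - y 0 := by
    intro n
    induction n with
    | zero => rfl
    | succ n ih =>
      have := hne n
      have := hstep n
      have := hstep (n + 1)
      grind
  have hlin : ∀ n : ℕ, y n = y 0 + n * (y 1 - y 0) := by
    intro n
    induction n with
    | zero => simp
    | succ n ih =>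
      push_cast
      linear_combination hconst n + ih
  have hinj : Function.Injective y := by
    intro m n hmn
    have h0 : y 1 - y 0 ≠ 0 := by
      have := hstep 0
      grind
    rw [hlin m, hlin n] at hmn
    exact_mod_cast mul_right_cancel₀ h0 (add_left_cancel hmn)
  exact Set.infinite_range_of_injective hinj hfin

theorem IsCandidateGridTranslation.exists_iterate_add_two_eq [Subsingleton (Fin d)] (i : Fin d)
    (hf : IsCandidateGridTranslation d ℓ f) {v : {v : Fin d → ℤ // InGrid d ℓ v}}
    (hv : ∀ n, (fun o => Option.bind o f)^[n] (some v) ≠ none) :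
    ∃ N, (fun o => Option.bind o f)^[N + 2] (some v) =
      (fun o => Option.bind o f)^[N] (some v) := by
  obtain ⟨x, hx⟩ := exists_orbit hv
  have : Finite {v : Fin d → ℤ // InGrid d ℓ v} := finite_setOf_inGrid ℓ
  have hfin : (Set.range fun n => (x n).1 i).Finite :=
    (Set.finite_range fun v : {v : Fin d → ℤ // InGrid d ℓ v} => v.1 i).subset
      (Set.range_comp_subset_range x fun v => v.1 i)
  obtain ⟨N, hN⟩ := exists_add_two_eq_of_finite_range hfin fun n => by
    simpa [TaxiAdj, Fintype.sum_subsingleton _ i, abs_sub_comm] using hf.adj_map _ _ (hx n).2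
  refine ⟨N, ?_⟩
  rw [(hx (N + 2)).1, (hx N).1]
  exact congrArg some (Subtype.ext (funext fun j => Subsingleton.elim i j ▸ hN))

theorem IsCandidateGridTranslation.ascends_of_maximal {i : Fin d} (hd : 1 < d)
    (hlen : ∀ j, j ≠ i → 3 ≤ ℓ j) (hlong : 2 * ∏ j ∈ Finset.univ.erase i, ℓ j + 2 ≤ ℓ i)
    (hf : IsCandidateGridTranslation d ℓ f)
    (hmax : ∀ g, IsCandidateGridTranslation d ℓ g →
      Set.ncard {v | g v ≠ none} ≤ Set.ncard {v | f v ≠ none}) : Ascends f := by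
  refine hf.ascends hlen (ncard_lost_le_of_maximal (by omega) hmax) ?_ hlong
  have := Fin.nontrivial_iff_two_le.mpr hd
  obtain ⟨j, hj⟩ := exists_ne i
  refine (hlen j hj).trans (Finset.single_le_prod' (f := ℓ) (fun k hk => ?_) (by simp [hj]))
  have := hlen k (Finset.ne_of_mem_erase hk)
  omega

theorem maximal_candidate_orbit_period_four_general (i : Fin d) (hlen : ∀ j, j ≠ i → 3 ≤ ℓ j)
    (hlong : 1 < d → 2 * ∏ j ∈ Finset.univ.erase i, ℓ j + 2 ≤ ℓ i)
    (hf : IsCandidateGridTranslation d ℓ f)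
    (hmax : ∀ g, IsCandidateGridTranslation d ℓ g →
      Set.ncard {v | g v ≠ none} ≤ Set.ncard {v | f v ≠ none})
    {v : {v : Fin d → ℤ // InGrid d ℓ v}}
    (hv : ∀ n, (fun o => Option.bind o f)^[n] (some v) ≠ none) :
    ∃ N, ∀ n, N ≤ n →
      (fun o => Option.bind o f)^[n + 2] (some v) =
        (fun o => Option.bind o f)^[n] (some v) := by
  by_cases hd : 1 < d
  · obtain ⟨h, hasc⟩ := hf.ascends_of_maximal hd hlen (hlong hd) hmax
    have : Finite {v : Fin d → ℤ // InGrid d ℓ v} := finite_setOf_inGrid ℓ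
    obtain ⟨n, hn⟩ := exists_iterate_eq_none_of_lt (g := f) (h := fun a => h a)
      (fun a b hab => hasc a b ⟨a.2, b.2, hab⟩) v
    exact absurd hn (hv n)
  · have : Subsingleton (Fin d) := Fin.subsingleton_iff_le_one.mpr (by omega)
    obtain ⟨N, hN⟩ := hf.exists_iterate_add_two_eq i hv
    refine ⟨N, fun n hn => ?_⟩
    obtain ⟨k, rfl⟩ := Nat.exists_eq_add_of_le' hn
    rw [add_assoc, Function.iterate_add_apply, hN, ← Function.iterate_add_apply]

theorem three_le_of_two_mul_prod_add_two_le
    (hℓ : ∀ i : Fin d, (i : ℕ) + 1 < d →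
      2 * (∏ k ∈ Finset.univ.filter (fun k : Fin d => i < k), ℓ k) + 2 ≤ ℓ i)
    (hlast : ∀ i : Fin d, (i : ℕ) + 1 = d → 3 ≤ ℓ i) (i : Fin d) : 3 ≤ ℓ i := by
  rcases (show (i : ℕ) + 1 ≤ d from i.isLt).lt_or_eq with hi | hi
  · have hpos : 0 < ∏ k ∈ Finset.univ.filter (fun k : Fin d => i < k), ℓ k := by
      refine Finset.prod_pos fun k _ => ?_
      rcases (show (k : ℕ) + 1 ≤ d from k.isLt).lt_or_eq with hk | hk
      · have := hℓ k hk
        omega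
      · have := hlast k hk
        omega
    have := hℓ i hi
    omega
  · exact hlast i hi

end Translation

theorem maximal_candidate_orbit_period_four
    (d : ℕ) (hd : 0 < d) (ℓ : Fin d → ℕ)
    (hℓ : ∀ i : Fin d, (i : ℕ) + 1 < d →
      2 * (∏ k ∈ Finset.univ.filter (fun k : Fin d => i < k), ℓ k) + 2 ≤ ℓ i)
    (hlast : 3 ≤ ℓ ⟨d - 1, by omega⟩)
    (f : {v : Fin d → ℤ // InGrid d ℓ v} → Option {v : Fin d → ℤ // InGrid d ℓ v})
    (hf : IsCandidateGridTranslation d ℓ f)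
    (hmax : ∀ g, IsCandidateGridTranslation d ℓ g →
      Set.ncard {v | g v ≠ none} ≤ Set.ncard {v | f v ≠ none})
    (v : {v : Fin d → ℤ // InGrid d ℓ v})
    (hv : ∀ n, (fun o => Option.bind o f)^[n] (some v) ≠ none) :
    ∃ N, ∀ n, N ≤ n →
      (fun o => Option.bind o f)^[n + 4] (some v) =
        (fun o => Option.bind o f)^[n] (some v) := by
  have hlen : ∀ j : Fin d, 3 ≤ ℓ j := three_le_of_two_mul_prod_add_two_le hℓ fun j hj => by
    rwa [show j = ⟨d - 1, by omega⟩ from Fin.ext (Nat.eq_sub_of_add_eq hj)]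
  have hlong : 1 < d →
      2 * ∏ j ∈ Finset.univ.erase (⟨0, hd⟩ : Fin d), ℓ j + 2 ≤ ℓ ⟨0, hd⟩ := fun hd1 => by
    convert hℓ ⟨0, hd⟩ (by simpa using hd1) using 4
    ext k
    simp [Fin.ext_iff, Fin.lt_def, Nat.pos_iff_ne_zero]
  obtain ⟨N, hN⟩ := maximal_candidate_orbit_period_four_general ⟨0, hd⟩ (fun j _ => hlen j) hlong
    hf hmax hv
  exact ⟨N, fun n hn => (hN (n + 2) (by omega)).trans (hN n hn)⟩
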